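/- Let ℓ, h, d, m ∈ ℕ with d ≥ 2ℓ, h ≥ 2ℓ+2 and m ≥ 2, and let G := G_{h,d,m}. For every set X of fewer than m vertices of G, there is a path P in G with one endvertex in S(G) and one endvertex in T(G) such that d_G(V(P), X ∪ {R(G)}) > ℓ. -/

import Mathlib

open SimpleGraph

namespace CGT

/-- Distance between two vertex sets, as an extended natural number. -/
noncomputable def sDist {V : Type*} (G : SimpleGraph V) (U U' : Set V) : ℕ∞ :=
  ⨅ (u : U) (v : U'), G.edist u.1 v.1

/-- The ball of radius `r` around a vertex set `U`. -/
def gBall {V : Type*} (G : SimpleGraph V) (U : Set V) (r : ℕ) : Set V :=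
  {v | ∃ u ∈ U, G.edist u v ≤ (r : ℕ∞)}

/-- A set of vertices is connected if the induced subgraph is connected. -/
def SetConn {V : Type*} (G : SimpleGraph V) (U : Set V) : Prop :=
  (G.induce U).Connected

/-- The vertex set of a walk. -/
def walkSupp {V : Type*} {G : SimpleGraph V} {a b : V} (p : G.Walk a b) : Set V :=
  {v | v ∈ p.support}

/-- `X` separates `Y` and `Z` in `G`: every path with one end in `Y` and one in `Z`
contains a vertex of `X`. -/
def Separates {V : Type*} (G : SimpleGraph V) (X Y Z : Set V) : Prop :=
  ∀ ⦃y z : V⦄, y ∈ Y → z ∈ Z → ∀ p : G.Walk y z, p.IsPath → ∃ x ∈ X, x ∈ p.support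

/-- `f` is an `(M,A)`-quasi-isometry from `G` to `H`.  The two-sided distance bound
`M⁻¹ d_G(u,v) - A ≤ d_H(f u, f v) ≤ M d_G(u,v) + A` is stated multiplied out over `ℕ∞`. -/
structure IsQI {V V' : Type*} (M A : ℕ) (G : SimpleGraph V) (H : SimpleGraph V')
    (f : V → V') : Prop where
  upper : ∀ u v : V, H.edist (f u) (f v) ≤ (M : ℕ∞) * G.edist u v + (A : ℕ∞)
  lower : ∀ u v : V, G.edist u v ≤ (M : ℕ∞) * H.edist (f u) (f v) + (M : ℕ∞) * (A : ℕ∞)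
  dense : ∀ w : V', ∃ v : V, H.edist w (f v) ≤ (A : ℕ∞)

/-- `G` is `(M,A)`-quasi-isometric to `H`. -/
def QIsometric {V V' : Type*} (M A : ℕ) (G : SimpleGraph V) (H : SimpleGraph V') : Prop :=
  ∃ f : V → V', IsQI M A G H f

/-- `X` is a minor of `G`. -/
def HasMinor {V W : Type*} (G : SimpleGraph V) (X : SimpleGraph W) : Prop :=
  ∃ U : W → Set V,
    (∀ x, (U x).Nonempty) ∧ (∀ x, SetConn G (U x)) ∧
    (∀ ⦃x y⦄, x ≠ y → Disjoint (U x) (U y)) ∧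
    ∀ ⦃x y⦄, X.Adj x y → ∃ u ∈ U x, ∃ v ∈ U y, G.Adj u v

/-- The `(a × b)`-grid graph. -/
def gridGraph (a b : ℕ) : SimpleGraph (Fin a × Fin b) :=
  SimpleGraph.fromRel (fun u v =>
    (u.1 = v.1 ∧ u.2.1 + 1 = v.2.1) ∨ (u.2 = v.2 ∧ u.1.1 + 1 = v.1.1))

/-- A `K`-fat model of `X` in `G`: disjoint connected branch sets joined by internally
disjoint branch paths, all pairwise at distance at least `K` except for a branch path and
the branch sets of its endpoints. -/
structure FatModel {V W : Type*} (G : SimpleGraph V) (X : SimpleGraph W) (K : ℕ) where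
  branch : W → Set V
  branch_nonempty : ∀ x, (branch x).Nonempty
  branch_connected : ∀ x, SetConn G (branch x)
  branch_disjoint : ∀ ⦃x y⦄, x ≠ y → Disjoint (branch x) (branch y)
  pathEnd : ∀ ⦃x y⦄, X.Adj x y → V
  path : ∀ ⦃x y⦄ (e : X.Adj x y), G.Walk (pathEnd e) (pathEnd e.symm)
  path_isPath : ∀ ⦃x y⦄ (e : X.Adj x y), (path e).IsPath
  path_symm : ∀ ⦃x y⦄ (e : X.Adj x y), path e.symm = (path e).reverse
  pathEnd_mem : ∀ ⦃x y⦄ (e : X.Adj x y), pathEnd e ∈ branch x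
  path_meets : ∀ ⦃x y⦄ (e : X.Adj x y) (z : W) (v : V), v ∈ (path e).support → v ∈ branch z →
    (z = x ∧ v = pathEnd e) ∨ (z = y ∧ v = pathEnd e.symm)
  path_int_disjoint : ∀ ⦃x y x' y'⦄ (e : X.Adj x y) (e' : X.Adj x' y'), s(x, y) ≠ s(x', y') →
    ∀ v, v ∈ (path e).support → v ∈ (path e').support → v = pathEnd e' ∨ v = pathEnd e'.symm
  fat_branch : ∀ ⦃x y⦄, x ≠ y → (K : ℕ∞) ≤ sDist G (branch x) (branch y)
  fat_path_branch : ∀ ⦃x y⦄ (e : X.Adj x y) (z : W), z ≠ x → z ≠ y →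
    (K : ℕ∞) ≤ sDist G (walkSupp (path e)) (branch z)
  fat_paths : ∀ ⦃x y x' y'⦄ (e : X.Adj x y) (e' : X.Adj x' y'), s(x, y) ≠ s(x', y') →
    (K : ℕ∞) ≤ sDist G (walkSupp (path e)) (walkSupp (path e'))

/-- `X` is a `K`-fat minor of `G`. -/
def IsFatMinor {V W : Type*} (G : SimpleGraph V) (X : SimpleGraph W) (K : ℕ) : Prop :=
  Nonempty (FatModel G X K)

/-- `W` is a `K`-fat `n`-path-connected set in `G`. -/
def FatPathConn {V : Type*} (G : SimpleGraph V) (K n : ℕ) (W : Set V) : Prop :=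
  (∃ S : Finset V, ↑S ⊆ W ∧ 2 * n ≤ S.card) ∧
  (∀ ⦃u v : V⦄, u ∈ W → v ∈ W → u ≠ v → (K : ℕ∞) ≤ G.edist u v) ∧
  ∀ l : ℕ, l ≤ n → ∀ A B : Finset V, ↑A ⊆ W → ↑B ⊆ W → A.card = l → B.card = l →
    ∃ (a b : Fin l → V) (P : ∀ i : Fin l, G.Walk (a i) (b i)),
      (∀ i, (P i).IsPath) ∧ (∀ i, a i ∈ A ∧ b i ∈ B) ∧
      ∀ i j, i ≠ j → (K : ℕ∞) ≤ sDist G (walkSupp (P i)) (walkSupp (P j))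

end CGT

namespace Ghdm

/-- Raw vertex codes for the graphs `G_{h,d,m}`:
`path k` is the `k`-th vertex of the base path; `tree j i p` is the vertex at position `p`
of the `i`-th binary tree at level `j` (the root being position `[]`); and
`spine j i k t e s` is the `s`-th internal vertex of the spine from the `k`-th leaf of that
tree to the `e`-th element of the `t`-th local gluing set at level `j-1`. -/
inductive Raw : Type where
  | path (k : ℕ)
  | tree (j i : ℕ) (p : List Bool)
  | spine (j i k t e s : ℕ)
deriving DecidableEq

/-- `N = 2^{h+1} - 1`, the number of copies of `G_{h,d,m-1}` glued inside `G_{h,d,m}`. -/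
def NN (h : ℕ) : ℕ := 2 ^ (h + 1) - 1

/-- Canonical representative of a raw vertex code: all tree roots are identified with the
single root `tree m 1 []`, and the leftmost leaf of tree `i > 1` is identified with the
rightmost leaf of tree `i - 1` (consecutive copies are glued along these leaves). -/
def canon (h m : ℕ) : Raw → Raw
  | .tree j i p =>
    if p = [] then .tree m 1 []
    else if p = List.replicate h false ∧ 1 < i then .tree j (i - 1) (List.replicate h true)
    else .tree j i p
  | x => x

/-- The `q`-bit binary representation of `i` (most significant bit first);
`false` means "left". -/
def natToBits (q i : ℕ) : List Bool := (List.range q).map fun a => Nat.testBit i (q - 1 - a)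

/-- Position of the `k`-th leaf (1-based, from the left) in a binary tree of height `h`. -/
def leafPos (h k : ℕ) : List Bool := natToBits h (k - 1)

/-- The `e`-th element of the `g`-th gluing set `V^{jv}_g` (at level `jv`):
its element `e = 1` is an anchor of the base path, and its element `e ≥ 2` is a shared
extreme leaf of the trees at level `e`. -/
def VsetElem (h d jv g e : ℕ) : Raw :=
  if e = 1 then .path ((g - 1) * NN h ^ (jv - 1) * (d + 1))
  else if (g - 1) * NN h ^ (jv - e) = 0 then .tree e 1 (List.replicate h false)
  else .tree e ((g - 1) * NN h ^ (jv - e)) (List.replicate h true)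

/-- Valid (canonical) vertex codes of `G_{h,d,m}`. -/
def Valid (h d m : ℕ) : Raw → Prop
  | .path k => k ≤ (d + 1) * NN h ^ (m - 1)
  | .tree j i p => 2 ≤ j ∧ j ≤ m ∧ 1 ≤ i ∧ i ≤ NN h ^ (m - j) ∧ p.length ≤ h ∧
      (p = [] → j = m ∧ i = 1) ∧ (p = List.replicate h false → p ≠ [] → i = 1)
  | .spine j i k t e s => 2 ≤ j ∧ j ≤ m ∧ 1 ≤ i ∧ i ≤ NN h ^ (m - j) ∧
      1 ≤ k ∧ k ≤ 2 ^ h ∧ (t = 2 * k - 2 ∨ t = 2 * k + 1) ∧ 1 ≤ t ∧ t ≤ 2 ^ (h + 1) ∧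
      1 ≤ e ∧ e ≤ j - 1 ∧ 1 ≤ s ∧ s ≤ d

/-- Generating adjacencies between raw vertex codes: consecutive base path vertices,
parent/child in the binary trees, consecutive spine vertices, a spine and the leaf it
starts at, a spine and the gluing-set vertex it ends at (the latter collapsed to a single
edge when `d = 0`). -/
inductive rawAdj (h d : ℕ) : Raw → Raw → Prop
  | base (k : ℕ) : rawAdj h d (.path k) (.path (k + 1))
  | child (j i : ℕ) (p : List Bool) (b : Bool) : p.length < h →
      rawAdj h d (.tree j i p) (.tree j i (p ++ [b]))
  | step (j i k t e s : ℕ) : rawAdj h d (.spine j i k t e s) (.spine j i k t e (s + 1))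
  | toLeaf (j i k t e : ℕ) : rawAdj h d (.tree j i (leafPos h k)) (.spine j i k t e 1)
  | toV (j i k t e : ℕ) :
      rawAdj h d (.spine j i k t e d) (VsetElem h d (j - 1) ((i - 1) * NN h + t) e)
  | short (j i k t e : ℕ) : d = 0 → 1 ≤ k → k ≤ 2 ^ h → (t = 2 * k - 2 ∨ t = 2 * k + 1) →
      1 ≤ t → t ≤ 2 ^ (h + 1) → 1 ≤ e → e ≤ j - 1 →
      rawAdj h d (.tree j i (leafPos h k)) (VsetElem h d (j - 1) ((i - 1) * NN h + t) e)

/-- Adjacency of canonical representatives. -/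
def rel (h d m : ℕ) (x y : Raw) : Prop :=
  ∃ a b, rawAdj h d a b ∧ x = canon h m a ∧ y = canon h m b

/-- The vertex set of `G_{h,d,m}`. -/
def Verts (h d m : ℕ) : Set Raw := {x | Valid h d m x}

/-- The graph `G_{h,d,m}`. -/
def G (h d m : ℕ) : SimpleGraph (Verts h d m) :=
  (SimpleGraph.fromRel (rel h d m)).induce (Verts h d m)

/-- Lift a set of raw codes to a set of vertices of `G_{h,d,m}`. -/
def lift {h d m : ℕ} (S : Set Raw) : Set (Verts h d m) := Subtype.val ⁻¹' S

/-- The root `R(G_{h,d,m})`. -/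
def RootR (m : ℕ) : Raw := .tree m 1 []

/-- The gluing set `V^{jv}_g` of `G_{h,d,m}`, as a set of raw codes. -/
def VsetRaw (h d m jv g : ℕ) : Set Raw :=
  {x | ∃ e, 1 ≤ e ∧ e ≤ jv ∧ x = canon h m (VsetElem h d jv g e)}

/-- The set `S(G_{h,d,m})`. -/
def SsetR (h d m : ℕ) : Set Raw :=
  VsetRaw h d m (m - 1) 1 ∪ {canon h m (.tree m 1 (leafPos h 1))}

/-- The set `T(G_{h,d,m})`. -/
def TsetR (h d m : ℕ) : Set Raw :=
  VsetRaw h d m (m - 1) (2 ^ (h + 1)) ∪ {canon h m (.tree m 1 (leafPos h (2 ^ h)))}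

/-- For a vertex of the top binary tree at position `p`, the (1-based) index of the
leftmost leaf of the top tree below it. -/
def kOf (h : ℕ) (p : List Bool) : ℕ :=
  (p.foldl (fun a b => 2 * a + if b then 1 else 0) 0) * 2 ^ (h - p.length) + 1

/-- `S(Δ(x))` for the vertex `x` of the top binary tree `B(G_{h,d,m})` at position `p`. -/
def SDeltaR (h d m : ℕ) (p : List Bool) : Set Raw :=
  VsetRaw h d m (m - 1) (2 * kOf h p - 1) ∪ {canon h m (.tree m 1 (leafPos h (kOf h p)))}

/-- The leaf of `B(G_{h,d,m})` immediately to the left of the leftmost leaf below the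
top-tree vertex at position `p`; it is the unique leaf joined by spines to `S(Δ(x))`. -/
def leafLeftR (h m : ℕ) (p : List Bool) : Raw :=
  canon h m (.tree m 1 (leafPos h (kOf h p - 1)))

end Ghdm

namespace Ghdm

lemma leafPos_length (h k : ℕ) : (leafPos h k).length = h := by
  simp [leafPos, natToBits]

lemma leafPos_one (h : ℕ) : leafPos h 1 = List.replicate h false := by
  apply List.ext_getElem <;> simp [leafPos, natToBits]

lemma leafPos_last (h : ℕ) : leafPos h (2 ^ h) = List.replicate h true := by
  apply List.ext_getElem
  · simp [leafPos, natToBits]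
  · intro i h1 h2
    have : i < h := by simpa using h2
    simp [leafPos, natToBits, Nat.testBit_two_pow_sub_one]
    omega

lemma NN_pos (h : ℕ) : 1 ≤ NN h := by
  have := Nat.one_le_two_pow (n := h)
  simp only [NN, pow_succ]; omega

lemma NN_eq (h : ℕ) : NN h + 1 = 2 ^ (h + 1) := by
  have := Nat.one_le_two_pow (n := h + 1)
  simp only [NN]; omega

/-- labels -/
structure Lab (h d : ℕ) (φ : Raw → ℤ) : Prop where
  lo : ∀ x, 0 ≤ φ x
  hi : ∀ x, φ x ≤ d + 1
  path1 : ∀ k, φ (.path (k + 1)) ≤ φ (.path k) + 1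
  path2 : ∀ k, φ (.path k) ≤ φ (.path (k + 1)) + 1
  tree : ∀ j i p b, p ≠ [] → φ (.tree j i (p ++ [b])) = φ (.tree j i p)
  can : ∀ j i, 1 < i → φ (.tree j (i - 1) (List.replicate h true)) =
    φ (.tree j i (List.replicate h false))

/-- extension of labels to spines -/
def ext (h d : ℕ) (φ : Raw → ℤ) : Raw → ℤ
  | .spine j i k t e s =>
      max (φ (.tree j i (leafPos h k)) - s) (min (φ (.tree j i (leafPos h k)) + s)
        (φ (VsetElem h d (j - 1) ((i - 1) * NN h + t) e)))
  | .path k => φ (.path k)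
  | .tree j i p => φ (.tree j i p)

/-- depth -/
def rho (h : ℕ) : Raw → ℤ
  | .tree _ _ p => p.length
  | _ => h

lemma VsetElem_cases (h d jv g e : ℕ) :
    (∃ k, VsetElem h d jv g e = .path k) ∨
    VsetElem h d jv g e = .tree e 1 (List.replicate h false) ∨
    (∃ i, VsetElem h d jv g e = .tree e i (List.replicate h true)) := by
  unfold VsetElem
  split_ifs
  · exact Or.inl ⟨_, rfl⟩
  · exact Or.inr (Or.inl rfl)
  · exact Or.inr (Or.inr ⟨_, rfl⟩)

lemma ext_Vset (h d jv g e : ℕ) (φ : Raw → ℤ) :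
    ext h d φ (VsetElem h d jv g e) = φ (VsetElem h d jv g e) := by
  rcases VsetElem_cases h d jv g e with ⟨k, hk⟩ | hk | ⟨i, hk⟩ <;> rw [hk] <;> rfl

lemma rho_Vset (h d jv g e : ℕ) : rho h (VsetElem h d jv g e) = h := by
  rcases VsetElem_cases h d jv g e with ⟨k, hk⟩ | hk | ⟨i, hk⟩ <;> rw [hk] <;> simp [rho]

lemma canon_Vset (h d m jv g e : ℕ) (hh : 1 ≤ h) :
    canon h m (VsetElem h d jv g e) = VsetElem h d jv g e := by
  obtain ⟨h, rfl⟩ : ∃ h', h = h' + 1 := ⟨h - 1, by omega⟩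
  rcases VsetElem_cases (h + 1) d jv g e with ⟨k, hk⟩ | hk | ⟨i, hk⟩ <;> rw [hk] <;>
    simp [canon, List.replicate_succ]

lemma rho_canon (h m : ℕ) (x : Raw) : rho h (canon h m x) = rho h x := by
  cases x <;> simp only [canon, rho]
  split_ifs with h1 h2
  · simp [h1]
  · simp [h2.1]
  · rfl

lemma ext_canon {h d : ℕ} {φ : Raw → ℤ} (hφ : Lab h d φ) (m : ℕ) (x : Raw)
    (hx : 0 < rho h x) : ext h d φ (canon h m x) = ext h d φ x := by
  cases x <;> simp only [canon]
  rename_i j i p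
  split_ifs with h1 h2
  · simp [h1, rho] at hx
  · simp only [ext, h2.1]
    exact hφ.can j i h2.2
  · rfl

lemma raw_rho {h d : ℕ} {a b : Raw} (hab : rawAdj h d a b) :
    rho h a ≤ rho h b + 1 ∧ rho h b ≤ rho h a + 1 := by
  cases hab <;> (try simp only [rho_Vset]) <;> simp [rho, leafPos_length] <;> omega

lemma raw_ext {h d : ℕ} {φ : Raw → ℤ} (hφ : Lab h d φ) {a b : Raw} (hab : rawAdj h d a b)
    (ha : 0 < rho h a) :
    ext h d φ a ≤ ext h d φ b + 1 ∧ ext h d φ b ≤ ext h d φ a + 1 := by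
  cases hab with
  | base k => exact ⟨hφ.path2 k, hφ.path1 k⟩
  | child j i p b hp =>
    have : p ≠ [] := by rintro rfl; simp [rho] at ha
    simp only [ext, hφ.tree j i p b this]
    omega
  | step j i k t e s =>
    simp only [ext]
    push_cast
    omega
  | toLeaf j i k t e =>
    simp only [ext]
    push_cast
    omega
  | toV j i k t e =>
    rw [ext_Vset]
    simp only [ext]
    have h1 := hφ.lo (.tree j i (leafPos h k))
    have h2 := hφ.hi (.tree j i (leafPos h k))
    have h3 := hφ.lo (VsetElem h d (j - 1) ((i - 1) * NN h + t) e)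
    have h4 := hφ.hi (VsetElem h d (j - 1) ((i - 1) * NN h + t) e)
    omega
  | short j i k t e hd =>
    rw [ext_Vset]
    simp only [ext]
    have h1 := hφ.lo (.tree j i (leafPos h k))
    have h2 := hφ.hi (.tree j i (leafPos h k))
    have h3 := hφ.lo (VsetElem h d (j - 1) ((i - 1) * NN h + t) e)
    have h4 := hφ.hi (VsetElem h d (j - 1) ((i - 1) * NN h + t) e)
    subst hd
    simp only [Nat.cast_zero] at *
    omega

lemma adj_iff {h d m : ℕ} {u v : Verts h d m} :
    (G h d m).Adj u v ↔ u.1 ≠ v.1 ∧ (rel h d m u.1 v.1 ∨ rel h d m v.1 u.1) := by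
  simp [G, SimpleGraph.fromRel_adj]

lemma adj_rho {h d m : ℕ} {u v : Verts h d m} (huv : (G h d m).Adj u v) :
    rho h u.1 ≤ rho h v.1 + 1 := by
  rcases (adj_iff.1 huv).2 with ⟨a, b, hab, h1, h2⟩ | ⟨a, b, hab, h1, h2⟩ <;>
    rw [h1, h2, rho_canon, rho_canon]
  · exact (raw_rho hab).1
  · exact (raw_rho hab).2

lemma adj_ext {h d m : ℕ} {φ : Raw → ℤ} (hφ : Lab h d φ) {u v : Verts h d m}
    (huv : (G h d m).Adj u v) (hu : 0 < rho h u.1) (hv : 0 < rho h v.1) :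
    ext h d φ u.1 ≤ ext h d φ v.1 + 1 := by
  rcases (adj_iff.1 huv).2 with ⟨a, b, hab, h1, h2⟩ | ⟨a, b, hab, h1, h2⟩ <;>
    simp only [h1, h2, rho_canon] at hu hv ⊢ <;>
    rw [ext_canon hφ, ext_canon hφ] <;> try assumption
  · exact (raw_ext hφ hab hu).1
  · exact (raw_ext hφ hab hv).2

lemma walk_rho {h d m : ℕ} {u v : Verts h d m} (p : (G h d m).Walk u v) :
    rho h u.1 ≤ rho h v.1 + p.length := by
  induction p with
  | nil => simp
  | cons huv p ih =>
    have := adj_rho huv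
    simp only [SimpleGraph.Walk.length_cons]
    push_cast
    omega

lemma walk_ext {h d m : ℕ} {φ : Raw → ℤ} (hφ : Lab h d φ) {u v : Verts h d m}
    (p : (G h d m).Walk u v) (hp : (p.length : ℤ) < rho h u.1) :
    ext h d φ u.1 ≤ ext h d φ v.1 + p.length := by
  induction p with
  | nil => simp
  | cons huv p ih =>
    have h1 := adj_rho huv
    simp only [SimpleGraph.Walk.length_cons] at *
    push_cast at *
    have h2 := adj_ext hφ huv (by omega) (by omega)
    have h3 := ih (by omega)
    omega

/-- x is within l of y -/
def near (h d m l : ℕ) (x y : Verts h d m) : Prop := ∃ p : (G h d m).Walk x y, p.length ≤ l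

lemma near_rho {h d m l : ℕ} {x y : Verts h d m} (hxy : near h d m l x y)  :
    rho h x.1 ≤ rho h y.1 + l := by
  obtain ⟨p, hp⟩ := hxy
  have := walk_rho p
  omega

lemma near_ext {h d m l : ℕ} {φ : Raw → ℤ} (hφ : Lab h d φ) (hh : 2 * l + 2 ≤ h)
    {x u v : Verts h d m} (h1 : near h d m l x u) (h2 : near h d m l x v)
    (hu : rho h u.1 = h) : ext h d φ u.1 ≤ ext h d φ v.1 + 2 * l := by
  obtain ⟨p, hp⟩ := h1
  obtain ⟨q, hq⟩ := h2
  have h3 := walk_ext hφ (p.reverse.append q) (by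
    simp only [SimpleGraph.Walk.length_append, SimpleGraph.Walk.length_reverse]; omega)
  simp only [SimpleGraph.Walk.length_append, SimpleGraph.Walk.length_reverse] at h3
  push_cast at h3
  omega

/-- level label -/
def phi1 (d J : ℕ) : Raw → ℤ
  | .tree j _ _ => if J ≤ j then d + 1 else 0
  | _ => 0

lemma lab1 (h d J : ℕ) : Lab h d (phi1 d J) where
  lo := by rintro (_ | _ | _) <;> simp only [phi1] <;> (try split_ifs) <;> omega
  hi := by rintro (_ | _ | _) <;> simp only [phi1] <;> (try split_ifs) <;> omega
  path1 := by simp [phi1]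
  path2 := by simp [phi1]
  tree := by simp [phi1]
  can := by simp [phi1]

/-- position label -/
def phi3 (h d c : ℕ) : Raw → ℤ
  | .tree j i p => if c < (i - 1 + if p.head? = some true then 1 else 0) * NN h ^ (j - 1)
      then d + 1 else 0
  | .path k => max 0 (min (d + 1) ((k : ℤ) - c * (d + 1)))
  | _ => 0

lemma lab3 (h d c : ℕ) (hh : 1 ≤ h) : Lab h d (phi3 h d c) where
  lo := by rintro (_ | _ | _) <;> simp only [phi3] <;> omega
  hi := by rintro (_ | _ | _) <;> simp only [phi3] <;> omega
  path1 := by intro k; simp only [phi3]; push_cast; omega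
  path2 := by intro k; simp only [phi3]; push_cast; omega
  tree := by
    intro j i p b hp
    cases p with
    | nil => exact absurd rfl hp
    | cons a p => simp [phi3]
  can := by
    obtain ⟨h, rfl⟩ : ∃ h', h = h' + 1 := ⟨h - 1, by omega⟩
    intro j i hi
    have : i - 1 - 1 + 1 = i - 1 := by omega
    simp [phi3, List.replicate_succ, this]

lemma phi3_Vset_lo (h d c n g e : ℕ) (hh : 1 ≤ h) (he : 1 ≤ e) (hen : e ≤ n + 1)
    (hg : (g - 1) * NN h ^ n ≤ c) : phi3 h d c (VsetElem h d (n + 1) g e) = 0 := by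
  obtain ⟨h, rfl⟩ : ∃ h', h = h' + 1 := ⟨h - 1, by omega⟩
  have key : (g - 1) * NN (h + 1) ^ (n + 1 - e) * NN (h + 1) ^ (e - 1) ≤ c := by
    rw [mul_assoc, ← pow_add]
    rwa [show n + 1 - e + (e - 1) = n by omega]
  unfold VsetElem
  split_ifs with h1 h2
  · simp only [phi3, Nat.add_sub_cancel]
    have : (((g - 1) * NN (h + 1) ^ n * (d + 1) : ℕ) : ℤ) ≤ (c * (d + 1) : ℕ) := by
      exact_mod_cast Nat.mul_le_mul_right _ hg
    push_cast at this ⊢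
    omega
  · simp [phi3, List.replicate_succ]
  · have h3 : (g - 1) * NN (h + 1) ^ (n + 1 - e) - 1 + 1 = (g - 1) * NN (h + 1) ^ (n + 1 - e) := by
      omega
    simp only [phi3, List.replicate_succ, List.head?_cons, if_true, h3]
    rw [if_neg (by omega)]

lemma phi3_Vset_hi (h d c n g e : ℕ) (hh : 1 ≤ h) (he : 1 ≤ e) (hen : e ≤ n + 1)
    (hg : c + 1 ≤ (g - 1) * NN h ^ n) : phi3 h d c (VsetElem h d (n + 1) g e) = d + 1 := by
  obtain ⟨h, rfl⟩ : ∃ h', h = h' + 1 := ⟨h - 1, by omega⟩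
  have key : c + 1 ≤ (g - 1) * NN (h + 1) ^ (n + 1 - e) * NN (h + 1) ^ (e - 1) := by
    rw [mul_assoc, ← pow_add]
    rwa [show n + 1 - e + (e - 1) = n by omega]
  unfold VsetElem
  split_ifs with h1 h2
  · simp only [phi3, Nat.add_sub_cancel]
    have : (((c + 1) * (d + 1) : ℕ) : ℤ) ≤ ((g - 1) * NN (h + 1) ^ n * (d + 1) : ℕ) := by
      exact_mod_cast Nat.mul_le_mul_right _ hg
    push_cast at this ⊢
    have h5 : ((c : ℤ) + 1) * (d + 1) = c * (d + 1) + (d + 1) := by ring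
    omega
  · rw [h2] at key; omega
  · have h3 : (g - 1) * NN (h + 1) ^ (n + 1 - e) - 1 + 1 = (g - 1) * NN (h + 1) ^ (n + 1 - e) := by
      omega
    simp only [phi3, List.replicate_succ, List.head?_cons, if_true, h3]
    rw [if_pos (by omega)]

/-- strips -/
def St (h d m : ℕ) : ℕ → ℕ → ℕ → Set Raw
  | 0, A, B => {x | ∃ k, A * (d + 1) ≤ k ∧ k ≤ B * (d + 1) ∧ x = .path k}
  | n + 1, A, B => St h d m n (A * NN h) (B * NN h) ∪
      {x | ∃ i k, A < i ∧ i ≤ B ∧ x = canon h m (.tree (n + 2) i (leafPos h k))} ∪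
      {x | ∃ i k t e s, A < i ∧ i ≤ B ∧ 1 ≤ t ∧ t ≤ 2 ^ (h + 1) ∧ 1 ≤ e ∧ e ≤ n + 1 ∧
        x = .spine (n + 2) i k t e s}

lemma St_mono (h d m n : ℕ) : ∀ {A B A' B' : ℕ}, A ≤ A' → B' ≤ B →
    St h d m n A' B' ⊆ St h d m n A B := by
  induction n with
  | zero =>
    rintro A B A' B' hA hB x ⟨k, h1, h2, rfl⟩
    exact ⟨k, (Nat.mul_le_mul_right _ hA).trans h1, h2.trans (Nat.mul_le_mul_right _ hB), rfl⟩
  | succ n ih =>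
    rintro A B A' B' hA hB x ((hx | ⟨i, k, h1, h2, rfl⟩) | ⟨i, k, t, e, s, h1, h2, hx⟩)
    · exact Or.inl (Or.inl (ih (Nat.mul_le_mul_right _ hA) (Nat.mul_le_mul_right _ hB) hx))
    · exact Or.inl (Or.inr ⟨i, k, by omega, by omega, rfl⟩)
    · exact Or.inr ⟨i, k, t, e, s, by omega, by omega, hx⟩

lemma St_rho (h d m n : ℕ) : ∀ {A B : ℕ} {x : Raw}, x ∈ St h d m n A B → rho h x = h := by
  induction n with
  | zero =>
    rintro A B x ⟨k, h1, h2, rfl⟩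
    rfl
  | succ n ih =>
    rintro A B x ((hx | ⟨i, k, h1, h2, rfl⟩) | ⟨i, k, t, e, s, h1, h2, -, -, -, -, rfl⟩)
    · exact ih hx
    · rw [rho_canon]; simp [rho, leafPos_length]
    · rfl

lemma St_phi1 (h d m J n : ℕ) (hh : 1 ≤ h) : ∀ {A B : ℕ} {x : Raw}, n + 2 ≤ J →
    x ∈ St h d m n A B → ext h d (phi1 d J) x = 0 := by
  induction n with
  | zero =>
    rintro A B x - ⟨k, h1, h2, rfl⟩
    rfl
  | succ n ih =>
    rintro A B x hJ ((hx | ⟨i, k, h1, h2, rfl⟩) | ⟨i, k, t, e, s, h1, h2, -, -, he1, he2, rfl⟩)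
    · exact ih (by omega) hx
    · rw [ext_canon (lab1 h d J) _ _ (by simp [rho, leafPos_length]; omega)]
      simp only [ext, phi1]
      rw [if_neg (by omega)]
    · have h5 : phi1 d J (VsetElem h d (n + 2 - 1) ((i - 1) * NN h + t) e) = 0 := by
        rcases VsetElem_cases h d (n + 2 - 1) ((i - 1) * NN h + t) e with ⟨k, hk⟩ | hk | ⟨i, hk⟩ <;>
          rw [hk] <;> simp only [phi1] <;> rw [if_neg (by omega)]
      simp only [ext, h5]
      simp only [phi1]
      rw [if_neg (by omega)]
      omega

lemma St_phi3_lo (h d m c n : ℕ) (hh : 1 ≤ h) : ∀ {A B : ℕ} {x : Raw}, B * NN h ^ n ≤ c →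
    x ∈ St h d m n A B → ext h d (phi3 h d c) x = 0 := by
  induction n with
  | zero =>
    rintro A B x hc ⟨k, h1, h2, rfl⟩
    simp only [ext, phi3]
    have : (k : ℤ) ≤ (c * (d + 1) : ℕ) := by
      exact_mod_cast h2.trans (Nat.mul_le_mul_right _ (by simpa using hc))
    push_cast at this
    omega
  | succ n ih =>
    rintro A B x hc ((hx | ⟨i, k, h1, h2, rfl⟩) | ⟨i, k, t, e, s, h1, h2, ht1, ht2, he1, he2, rfl⟩)
    · exact ih (by rw [pow_succ] at hc; linarith) hx
    all_goals
      have hle : phi3 h d c (.tree (n + 2) i (leafPos h k)) = 0 := by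
        simp only [phi3]
        rw [if_neg]
        rw [not_lt]
        refine le_trans (Nat.mul_le_mul_right _ ?_) hc
        split_ifs <;> omega
    · rw [ext_canon (lab3 h d c hh) _ _ (by simp [rho, leafPos_length]; omega)]
      exact hle
    · have h5 : phi3 h d c (VsetElem h d (n + 2 - 1) ((i - 1) * NN h + t) e) = 0 := by
        apply phi3_Vset_lo _ _ _ _ _ _ hh he1 he2
        have : (i - 1) * NN h + t - 1 ≤ B * NN h := by
          have h6 : (i - 1 + 1) * NN h ≤ B * NN h := Nat.mul_le_mul_right _ (by omega)
          rw [add_mul] at h6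
          have := NN_eq h
          omega
        refine le_trans (Nat.mul_le_mul_right _ this) ?_
        rw [pow_succ] at hc; linarith
      simp only [ext, h5, hle]
      omega

lemma St_phi3_hi (h d m c n : ℕ) (hh : 1 ≤ h) : ∀ {A B : ℕ} {x : Raw}, c + 1 ≤ A * NN h ^ n →
    x ∈ St h d m n A B → ext h d (phi3 h d c) x = d + 1 := by
  induction n with
  | zero =>
    rintro A B x hc ⟨k, h1, h2, rfl⟩
    simp only [ext, phi3]
    have : (((c + 1) * (d + 1) : ℕ) : ℤ) ≤ k := by
      exact_mod_cast (Nat.mul_le_mul_right _ (by simpa using hc)).trans h1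
    push_cast at this
    have h5 : ((c : ℤ) + 1) * (d + 1) = c * (d + 1) + (d + 1) := by ring
    omega
  | succ n ih =>
    rintro A B x hc ((hx | ⟨i, k, h1, h2, rfl⟩) | ⟨i, k, t, e, s, h1, h2, ht1, ht2, he1, he2, rfl⟩)
    · exact ih (by rw [pow_succ] at hc; linarith) hx
    all_goals
      have hle : phi3 h d c (.tree (n + 2) i (leafPos h k)) = d + 1 := by
        simp only [phi3]
        rw [if_pos]
        refine lt_of_lt_of_le hc (Nat.mul_le_mul_right _ ?_)
        split_ifs <;> omega
    · rw [ext_canon (lab3 h d c hh) _ _ (by simp [rho, leafPos_length]; omega)]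
      exact hle
    · have h5 : phi3 h d c (VsetElem h d (n + 2 - 1) ((i - 1) * NN h + t) e) = d + 1 := by
        apply phi3_Vset_hi _ _ _ _ _ _ hh he1 he2
        have : A * NN h ≤ (i - 1) * NN h + t - 1 := by
          have h6 : A * NN h ≤ (i - 1) * NN h := Nat.mul_le_mul_right _ (by omega)
          omega
        refine le_trans ?_ (Nat.mul_le_mul_right _ this)
        rw [pow_succ] at hc; linarith
      simp only [ext, h5, hle]
      omega

/-- x hits a set -/
def hits (h d m l : ℕ) (x : Verts h d m) (U : Set Raw) : Prop := ∃ v, v.1 ∈ U ∧ near h d m l x v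

lemma F1 {h d m l n A B i k : ℕ} (hd : 2 * l ≤ d) (hh : 2 * l + 2 ≤ h) {x y : Verts h d m}
    (hx : hits h d m l x (St h d m n A B))
    (hy : y.1 = canon h m (.tree (n + 2) i (leafPos h k))) : ¬ near h d m l x y := by
  intro hxy
  obtain ⟨v, hv, hxv⟩ := hx
  have h1 := near_ext (lab1 h d (n + 2)) hh hxy hxv
    (by rw [hy, rho_canon]; simp [rho, leafPos_length])
  rw [St_phi1 h d m (n + 2) n (by omega) le_rfl hv, hy, ext_canon (lab1 h d _) _ _ (by
    simp [rho, leafPos_length]; omega)] at h1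
  simp only [ext, phi1, le_refl, if_true] at h1
  omega

lemma F3 {h d m l n A B g : ℕ} (hd : 2 * l ≤ d) (hh : 2 * l + 2 ≤ h) {x : Verts h d m}
    (hx : hits h d m l x (St h d m n A g)) : ¬ hits h d m l x (St h d m n (g + 1) B) := by
  rintro ⟨w, hw, hxw⟩
  obtain ⟨v, hv, hxv⟩ := hx
  have h1 := near_ext (lab3 h d (g * NN h ^ n) (by omega)) hh hxw hxv (St_rho _ _ _ _ hw)
  rw [St_phi3_lo h d m _ n (by omega) le_rfl hv, St_phi3_hi h d m _ n (by omega) _ hw] at h1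
  · omega
  · have := Nat.pow_le_pow_left (NN_pos h) n
    rw [one_pow] at this
    rw [add_mul]; omega

end Ghdm
namespace Ghdm

lemma exit_walk {V : Type*} {Γ : SimpleGraph V} {I C : Set V}
    (hI : ∀ a ∈ I, ∀ b, Γ.Adj a b → b ∈ I ∨ b ∈ C) {a b : V} (p : Γ.Walk a b)
    (ha : a ∈ I) (hb : b ∉ I) :
    ∃ c ∈ C, ∃ (p1 : Γ.Walk a c) (p2 : Γ.Walk c b), p1.length + p2.length = p.length := by
  induction p with
  | nil => exact absurd ha hb
  | @cons u v w huv p ih =>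
    rcases hI u ha v huv with hv | hv
    · obtain ⟨c, hc, p1, p2, hp⟩ := ih hv hb
      exact ⟨c, hc, .cons huv p1, p2, by simp only [SimpleGraph.Walk.length_cons]; omega⟩
    · exact ⟨v, hv, .cons huv .nil, p, by simp; omega⟩

lemma canon_eq_spine {h m j i k t e s : ℕ} {a : Raw}
    (ha : Raw.spine j i k t e s = canon h m a) : a = .spine j i k t e s := by
  cases a with
  | path k => simp [canon] at ha
  | tree j i p => simp only [canon] at ha; split_ifs at ha
  | spine => exact ha.symm

lemma Vset_ne_spine {h d jv g e' j i k t e s : ℕ} :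
    VsetElem h d jv g e' ≠ .spine j i k t e s := by
  rcases VsetElem_cases h d jv g e' with ⟨k, hk⟩ | hk | ⟨i, hk⟩ <;> rw [hk] <;> simp

lemma spine_nbr {h d m j i k t e s : ℕ} (hh : 1 ≤ h) {u v : Verts h d m}
    (hu : u.1 = .spine j i k t e s) (huv : (G h d m).Adj u v) :
    (∃ s', v.1 = .spine j i k t e s') ∨ v.1 = canon h m (.tree j i (leafPos h k)) ∨
      v.1 = VsetElem h d (j - 1) ((i - 1) * NN h + t) e := by
  rcases (adj_iff.1 huv).2 with ⟨a, b, hab, h1, h2⟩ | ⟨a, b, hab, h1, h2⟩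
  · rw [hu] at h1
    have := canon_eq_spine h1
    rw [h2]
    cases hab with
    | base => simp at this
    | child => simp at this
    | step =>
      simp at this
      obtain ⟨rfl, rfl, rfl, rfl, rfl, rfl⟩ := this
      exact Or.inl ⟨_, rfl⟩
    | toLeaf => simp at this
    | toV =>
      simp at this
      obtain ⟨rfl, rfl, rfl, rfl, rfl, rfl⟩ := this
      rw [canon_Vset _ _ _ _ _ _ hh]
      exact Or.inr (Or.inr rfl)
    | short => simp at this
  · rw [hu] at h2
    have := canon_eq_spine h2
    rw [h1]
    cases hab with
    | base => simp at this
    | child => simp at this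
    | step =>
      simp at this
      obtain ⟨rfl, rfl, rfl, rfl, rfl, rfl⟩ := this
      exact Or.inl ⟨_, rfl⟩
    | toLeaf =>
      simp at this
      obtain ⟨rfl, rfl, rfl, rfl, rfl, rfl⟩ := this
      exact Or.inr (Or.inl rfl)
    | toV => exact absurd this Vset_ne_spine
    | short => exact absurd this Vset_ne_spine

lemma St_not_spine (h d m J n : ℕ) : ∀ {A B : ℕ} {x : Raw}, n + 2 ≤ J →
    x ∈ St h d m n A B → ∀ i k t e s, x ≠ .spine J i k t e s := by
  induction n with
  | zero =>
    rintro A B x - ⟨k, h1, h2, rfl⟩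
    simp
  | succ n ih =>
    rintro A B x hJ ((hx | ⟨i, k, h1, h2, rfl⟩) | ⟨i, k, t, e, s, h1, h2, -, -, he1, he2, rfl⟩)
    · exact ih (by omega) hx
    · intro i k t e s hx
      have := canon_eq_spine hx.symm
      simp at this
    · intro i k t e s hx
      simp at hx
      omega

lemma F2 {h d m l n A B i k t e s : ℕ} (hh : 1 ≤ h) {x y : Verts h d m}
    (hx : hits h d m l x (St h d m n A B)) (hy : y.1 = .spine (n + 2) i k t e s)
    (hxy : near h d m l x y) :
    ∃ c, near h d m l x c ∧ (c.1 = canon h m (.tree (n + 2) i (leafPos h k)) ∨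
      c.1 = VsetElem h d (n + 1) ((i - 1) * NN h + t) e) := by
  obtain ⟨w, hw, q, hq⟩ := hx
  obtain ⟨p, hp⟩ := hxy
  have hI : ∀ a ∈ {a : Verts h d m | ∃ s', a.1 = .spine (n + 2) i k t e s'}, ∀ b,
      (G h d m).Adj a b → b ∈ {a : Verts h d m | ∃ s', a.1 = .spine (n + 2) i k t e s'} ∨
      b ∈ {c : Verts h d m | c.1 = canon h m (.tree (n + 2) i (leafPos h k)) ∨
      c.1 = VsetElem h d (n + 1) ((i - 1) * NN h + t) e} := by
    rintro a ⟨s', ha⟩ b hab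
    exact spine_nbr hh ha hab
  by_cases hxI : x ∈ {a : Verts h d m | ∃ s', a.1 = .spine (n + 2) i k t e s'}
  · obtain ⟨c, hc, p1, p2, h12⟩ := exit_walk hI q hxI (by
      rintro ⟨s', hs'⟩
      exact St_not_spine h d m (n + 2) n le_rfl hw _ _ _ _ _ hs')
    exact ⟨c, ⟨p1, by omega⟩, hc⟩
  · obtain ⟨c, hc, p1, p2, h12⟩ := exit_walk hI p.reverse ⟨s, hy⟩ hxI
    rw [SimpleGraph.Walk.length_reverse] at h12
    exact ⟨c, ⟨p2.reverse, by rw [SimpleGraph.Walk.length_reverse]; omega⟩, hc⟩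

/-- bad vertices -/
def bad (h d m l : ℕ) (X : Set (Verts h d m)) (v : Verts h d m) : Prop :=
  (∃ x ∈ X, near h d m l x v) ∨ ∃ r : Verts h d m, r.1 = RootR m ∧ near h d m l r v

/-- connected by a good walk -/
def Conn (h d m l : ℕ) (X : Set (Verts h d m)) (x y : Raw) : Prop :=
  ∃ (hx : Valid h d m x) (hy : Valid h d m y),
    ∃ P : (G h d m).Walk ⟨x, hx⟩ ⟨y, hy⟩, ∀ v ∈ P.support, ¬ bad h d m l X v

lemma not_bad {h d m l : ℕ} (hh : 2 * l + 2 ≤ h) {X : Set (Verts h d m)} {v : Verts h d m}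
    (hv : rho h v.1 = h) (hX : ∀ x ∈ X, ¬ near h d m l x v) : ¬ bad h d m l X v := by
  rintro (⟨x, hx, hxv⟩ | ⟨r, hr, p, hp⟩)
  · exact hX x hx hxv
  · have := walk_rho p.reverse
    rw [SimpleGraph.Walk.length_reverse, hr, hv] at this
    simp [RootR, rho] at this
    omega

section
variable {h d m l : ℕ} {X : Set (Verts h d m)}

lemma Conn.refl {x : Raw} (hx : Valid h d m x) (hb : ¬ bad h d m l X ⟨x, hx⟩) :
    Conn h d m l X x x := ⟨hx, hx, .nil, by simpa using hb⟩

lemma Conn.trans {x y z : Raw} (h1 : Conn h d m l X x y) (h2 : Conn h d m l X y z) :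
    Conn h d m l X x z := by
  obtain ⟨hx, hy, p, hp⟩ := h1
  obtain ⟨_, hz, q, hq⟩ := h2
  refine ⟨hx, hz, p.append q, fun v hv => ?_⟩
  rcases (SimpleGraph.Walk.mem_support_append_iff _ _).1 hv with hv | hv
  · exact hp v hv
  · exact hq v hv

lemma Conn.symm {x y : Raw} (h1 : Conn h d m l X x y) : Conn h d m l X y x := by
  obtain ⟨hx, hy, p, hp⟩ := h1
  exact ⟨hy, hx, p.reverse, fun v hv => hp v (by simpa using hv)⟩

lemma Conn.left {x y : Raw} (h1 : Conn h d m l X x y) :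
    ∃ hx : Valid h d m x, ¬ bad h d m l X ⟨x, hx⟩ := by
  obtain ⟨hx, hy, p, hp⟩ := h1
  exact ⟨hx, hp _ p.start_mem_support⟩

lemma Conn.of_rel {x y : Raw} (hr : rel h d m x y) (hx : Valid h d m x)
    (hbx : ¬ bad h d m l X ⟨x, hx⟩) (hy : Valid h d m y) (hby : ¬ bad h d m l X ⟨y, hy⟩) :
    Conn h d m l X x y := by
  by_cases hxy : x = y
  · subst hxy; exact Conn.refl hx hbx
  · have hadj : (G h d m).Adj ⟨x, hx⟩ ⟨y, hy⟩ := adj_iff.2 ⟨hxy, Or.inl hr⟩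
    refine ⟨hx, hy, .cons hadj .nil, fun v hv => ?_⟩
    simp at hv
    rcases hv with rfl | rfl
    · exact hbx
    · exact hby

end

lemma Vset_valid {h d m q g e : ℕ} (hh : 1 ≤ h) (he : 1 ≤ e) (heq : e ≤ q) (hqm : q ≤ m)
    (hg : g - 1 ≤ NN h ^ (m - q)) : Valid h d m (VsetElem h d q g e) := by
  obtain ⟨h, rfl⟩ : ∃ h', h = h' + 1 := ⟨h - 1, by omega⟩
  have hN := NN_pos (h + 1)
  unfold VsetElem
  split_ifs with h1 h2
  · simp only [Valid]
    calc (g - 1) * NN (h + 1) ^ (q - 1) * (d + 1)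
        ≤ NN (h + 1) ^ (m - q) * NN (h + 1) ^ (q - 1) * (d + 1) := by gcongr
      _ = (d + 1) * NN (h + 1) ^ (m - 1) := by
        rw [← pow_add, show m - q + (q - 1) = m - 1 by omega, mul_comm]
  · refine ⟨by omega, by omega, le_rfl, Nat.one_le_pow _ _ hN, by simp, by simp, by simp⟩
  · refine ⟨by omega, by omega, by omega, ?_, by simp, by simp, by simp [List.replicate_succ]⟩
    calc (g - 1) * NN (h + 1) ^ (q - e)
        ≤ NN (h + 1) ^ (m - q) * NN (h + 1) ^ (q - e) := by gcongr
      _ = NN (h + 1) ^ (m - e) := by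
        rw [← pow_add, show m - q + (q - e) = m - e by omega]

lemma leaf_valid {h d m j i k : ℕ} (hh : 1 ≤ h) (hj : 2 ≤ j) (hjm : j ≤ m) (hi : 1 ≤ i)
    (hi2 : i ≤ NN h ^ (m - j)) : Valid h d m (canon h m (.tree j i (leafPos h k))) := by
  obtain ⟨h, rfl⟩ : ∃ h', h = h' + 1 := ⟨h - 1, by omega⟩
  have h1 : leafPos (h + 1) k ≠ [] := by
    intro h0
    have := leafPos_length (h + 1) k
    rw [h0] at this
    simp at this
  simp only [canon]
  rw [if_neg h1]
  split_ifs with h2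
  · refine ⟨hj, hjm, by omega, by omega, by simp, by simp, by simp [List.replicate_succ]⟩
  · refine ⟨hj, hjm, hi, hi2, by simp [leafPos_length], fun h0 => absurd h0 h1, fun h0 _ => ?_⟩
    by_contra h3
    exact h2 ⟨h0, by omega⟩

lemma spine_conn {h d m l n i k t e : ℕ} {X : Set (Verts h d m)} (hh : 1 ≤ h)
    (hval : ∀ s, 1 ≤ s → s ≤ d → Valid h d m (.spine (n + 2) i k t e s))
    (hk : 1 ≤ k) (hk2 : k ≤ 2 ^ h) (ht : t = 2 * k - 2 ∨ t = 2 * k + 1) (ht1 : 1 ≤ t)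
    (ht2 : t ≤ 2 ^ (h + 1)) (he : 1 ≤ e) (hen : e ≤ n + 1)
    (hlv : Valid h d m (canon h m (.tree (n + 2) i (leafPos h k))))
    (hlb : ¬ bad h d m l X ⟨_, hlv⟩)
    (hvv : Valid h d m (VsetElem h d (n + 1) ((i - 1) * NN h + t) e))
    (hvb : ¬ bad h d m l X ⟨_, hvv⟩)
    (hsb : ∀ s (hs : Valid h d m (.spine (n + 2) i k t e s)), 
      ¬ bad h d m l X ⟨.spine (n + 2) i k t e s, hs⟩) :
    Conn h d m l X (canon h m (.tree (n + 2) i (leafPos h k)))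
      (VsetElem h d (n + 1) ((i - 1) * NN h + t) e) := by
  rcases Nat.eq_zero_or_pos d with hd | hd
  · refine Conn.of_rel ⟨_, _, rawAdj.short (n + 2) i k t e hd hk hk2 ht ht1 ht2 he hen, rfl, ?_⟩
      hlv hlb hvv hvb
    exact (canon_Vset _ _ _ _ _ _ hh).symm
  · have key : ∀ s, s + 1 ≤ d → Conn h d m l X (canon h m (.tree (n + 2) i (leafPos h k)))
        (.spine (n + 2) i k t e (s + 1)) := by
      intro s
      induction s with
      | zero =>
        intro hs
        exact Conn.of_rel ⟨_, _, rawAdj.toLeaf (n + 2) i k t e, rfl, rfl⟩ hlv hlb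
          (hval _ le_rfl hs) (hsb _ _)
      | succ s ih =>
        intro hs
        exact (ih (by omega)).trans (Conn.of_rel ⟨_, _, rawAdj.step (n + 2) i k t e (s + 1),
          rfl, rfl⟩ (hval _ (by omega) (by omega)) (hsb _ _) (hval _ (by omega) hs) (hsb _ _))
    obtain ⟨d', rfl⟩ : ∃ d', d = d' + 1 := ⟨d - 1, by omega⟩
    refine (key d' le_rfl).trans (Conn.of_rel ⟨_, _, rawAdj.toV (n + 2) i k t e, rfl, ?_⟩
      (hval _ (by omega) le_rfl) (hsb _ _) hvv hvb)
    exact (canon_Vset _ _ _ _ _ _ hh).symm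

lemma Vset_succ (h d n A e : ℕ) (he : 1 ≤ e) (hen : e ≤ n + 1) :
    VsetElem h d (n + 2) (A + 1) e = VsetElem h d (n + 1) (A * NN h + 1) e := by
  have h1 : A * NN h ^ (n + 2 - e) = A * NN h * NN h ^ (n + 1 - e) := by
    rw [show n + 2 - e = (n + 1 - e) + 1 by omega, pow_succ]; ring
  unfold VsetElem
  simp only [Nat.add_sub_cancel, h1]
  split_ifs with h2
  · subst h2
    rw [show n + 2 - 1 = n + 1 by omega, pow_succ]; congr 1; ring
  · rfl
  · rfl

lemma Vset_top (h d m n A : ℕ) (hh : 1 ≤ h) :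
    VsetElem h d (n + 2) (A + 1) (n + 2) =
      canon h m (.tree (n + 2) (A + 1) (leafPos h 1)) := by
  obtain ⟨h, rfl⟩ : ∃ h', h = h' + 1 := ⟨h - 1, by omega⟩
  rw [leafPos_one]
  unfold VsetElem
  rcases Nat.eq_zero_or_pos A with rfl | hA
  · simp [canon]
  · have : A ≠ 0 := by omega
    simp [canon, this]

lemma leaf_glue (h m j i : ℕ) (hh : 1 ≤ h) (hi : 1 ≤ i) :
    canon h m (.tree j (i + 1) (leafPos h 1)) = canon h m (.tree j i (leafPos h (2 ^ h))) := by
  obtain ⟨h, rfl⟩ : ∃ h', h = h' + 1 := ⟨h - 1, by omega⟩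
  rw [leafPos_one, leafPos_last]
  simp [canon, List.replicate_succ]
  omega

end Ghdm
namespace Ghdm

/-- the set of hitting vertices -/
def hset (h d m l : ℕ) (X : Set (Verts h d m)) (n A B : ℕ) : Set (Verts h d m) :=
  {x | x ∈ X ∧ hits h d m l x (St h d m n A B)}

lemma hset_mono {h d m l : ℕ} {X : Set (Verts h d m)} {n A B A' B' : ℕ} (hA : A ≤ A')
    (hB : B' ≤ B) : hset h d m l X n A' B' ⊆ hset h d m l X n A B := by
  rintro x ⟨hx, v, hv, hxv⟩
  exact ⟨hx, v, St_mono h d m n hA hB hv, hxv⟩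

lemma base_case {h d m l : ℕ} {X : Set (Verts h d m)} (hfin : X.Finite) (hh : 2 * l + 2 ≤ h)
    {A B : ℕ} (hAB : A < B) (hB : B ≤ NN h ^ (m - 1))
    (hc : (hset h d m l X 0 A B).ncard < 1) :
    Conn h d m l X (.path (A * (d + 1))) (.path (B * (d + 1))) := by
  have he : hset h d m l X 0 A B = ∅ := by
    rw [← Set.ncard_eq_zero (hfin.subset (fun x hx => hx.1))]; omega
  have hval : ∀ k, k ≤ B * (d + 1) → Valid h d m (.path k) := by
    intro k hk
    simp only [Valid]
    refine hk.trans ?_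
    rw [mul_comm]
    exact Nat.mul_le_mul_left _ hB
  have hgood : ∀ k (hk : Valid h d m (.path k)), A * (d + 1) ≤ k → k ≤ B * (d + 1) →
      ¬ bad h d m l X ⟨.path k, hk⟩ := by
    intro k hk h1 h2
    apply not_bad hh rfl
    intro x hx hxv
    have : x ∈ hset h d m l X 0 A B := ⟨hx, _, ⟨k, h1, h2, rfl⟩, hxv⟩
    rw [he] at this
    exact this
  have key : ∀ r, A * (d + 1) + r ≤ B * (d + 1) →
      Conn h d m l X (.path (A * (d + 1))) (.path (A * (d + 1) + r)) := by
    intro r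
    induction r with
    | zero => intro hr; exact Conn.refl (hval _ hr) (hgood _ _ le_rfl hr)
    | succ r ih =>
      intro hr
      exact (ih (by omega)).trans (Conn.of_rel ⟨_, _, rawAdj.base _, rfl, rfl⟩ (hval _ (by omega))
        (hgood _ _ (by omega) (by omega)) (hval _ (by omega)) (hgood _ _ (by omega) (by omega)))
  have hle : A * (d + 1) ≤ B * (d + 1) := Nat.mul_le_mul_right _ hAB.le
  have := key (B * (d + 1) - A * (d + 1)) (by omega)
  rwa [show A * (d + 1) + (B * (d + 1) - A * (d + 1)) = B * (d + 1) by omega] at this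

theorem main_ind {h d m l : ℕ} {X : Set (Verts h d m)} (hfin : X.Finite) (hd : 2 * l ≤ d)
    (hh : 2 * l + 2 ≤ h) : ∀ n, n + 1 ≤ m → ∀ A B, A < B → B ≤ NN h ^ (m - (n + 1)) →
    (hset h d m l X n A B).ncard < n + 1 →
    ∃ e e', 1 ≤ e ∧ e ≤ n + 1 ∧ 1 ≤ e' ∧ e' ≤ n + 1 ∧
      Conn h d m l X (VsetElem h d (n + 1) (A + 1) e) (VsetElem h d (n + 1) (B + 1) e') := by
  intro n
  induction n with
  | zero =>
    intro hm A B hAB hB hc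
    refine ⟨1, 1, le_rfl, le_rfl, le_rfl, le_rfl, ?_⟩
    have := base_case hfin hh hAB hB hc
    simpa [VsetElem] using this
  | succ n ih =>
    intro hm A B hAB hB hc
    have hN := NN_eq h
    have h4 : 4 ≤ 2 ^ h := by
      calc 4 = 2 ^ 2 := rfl
        _ ≤ 2 ^ h := Nat.pow_le_pow_right (by norm_num) (by omega)
    rw [pow_succ] at hN
    have hAB' : A * NN h < B * NN h := Nat.mul_lt_mul_of_pos_right hAB (NN_pos h)
    have hB' : B * NN h ≤ NN h ^ (m - (n + 1)) := by
      rw [show m - (n + 1) = m - (n + 1 + 1) + 1 by omega, pow_succ]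
      exact Nat.mul_le_mul_right _ hB
    have ih := ih (by omega)
    have hfs : ∀ n A B, (hset h d m l X n A B).Finite :=
      fun n A B => hfin.subset (fun x hx => hx.1)
    by_cases hc' : (hset h d m l X n (A * NN h) (B * NN h)).ncard < n + 1
    · obtain ⟨e, e', h1, h2, h3, h4, hC⟩ := ih _ _ hAB' hB' hc'
      refine ⟨e, e', h1, by omega, h3, by omega, ?_⟩
      rwa [Vset_succ _ _ _ _ _ h1 h2, Vset_succ _ _ _ _ _ h3 h4]
    have hsub : hset h d m l X n (A * NN h) (B * NN h) ⊆ hset h d m l X (n + 1) A B := by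
      rintro x ⟨hx, v, hv, hxv⟩
      exact ⟨hx, v, Or.inl (Or.inl hv), hxv⟩
    have heq := Set.eq_of_subset_of_ncard_le hsub (by omega) (hfs _ _ _)
    -- leaves
    have hleafv : ∀ i k, A < i → i ≤ B →
        Valid h d m (canon h m (.tree (n + 2) i (leafPos h k))) := fun i k h1 h2 =>
      leaf_valid (by omega) (by omega) hm (by omega) (h2.trans hB)
    have hleafb : ∀ i k (hv : Valid h d m (canon h m (.tree (n + 2) i (leafPos h k)))),
        A < i → i ≤ B → ¬ bad h d m l X ⟨_, hv⟩ := by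
      intro i k hv h1 h2
      apply not_bad hh (by rw [rho_canon]; simp [rho, leafPos_length])
      intro x hx hxv
      have : x ∈ hset h d m l X (n + 1) A B :=
        ⟨hx, _, Or.inl (Or.inr ⟨i, k, h1, h2, rfl⟩), hxv⟩
      rw [← heq] at this
      exact F1 hd hh this.2 rfl hxv
    -- attaching
    have hatt : ∀ i k t e, A < i → i ≤ B → 1 ≤ k → k ≤ 2 ^ h → (t = 2 * k - 2 ∨ t = 2 * k + 1) →
        1 ≤ t → t ≤ 2 ^ (h + 1) → 1 ≤ e → e ≤ n + 1 →
        (∃ hv : Valid h d m (VsetElem h d (n + 1) ((i - 1) * NN h + t) e),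
          ¬ bad h d m l X ⟨_, hv⟩) →
        Conn h d m l X (canon h m (.tree (n + 2) i (leafPos h k)))
          (VsetElem h d (n + 1) ((i - 1) * NN h + t) e) := by
      rintro i k t e h1 h2 h3 h4 h5 h6 h7 h8 h9 ⟨hv, hvb⟩
      refine spine_conn (by omega) ?_ h3 h4 h5 h6 h7 h8 h9 (hleafv i k h1 h2)
        (hleafb i k _ h1 h2) hv hvb ?_
      · intro s hs1 hs2
        exact ⟨by omega, hm, by omega, h2.trans hB, h3, h4, h5, h6, h7, h8, h9, hs1, hs2⟩
      · intro s hs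
        apply not_bad hh rfl
        intro x hx hxv
        have hx' : x ∈ hset h d m l X (n + 1) A B :=
          ⟨hx, _, Or.inr ⟨i, k, t, e, s, h1, h2, h6, h7, h8, h9, rfl⟩, hxv⟩
        rw [← heq] at hx'
        obtain ⟨c, hxc, hc | hc⟩ := F2 (by omega) hx'.2 rfl hxv
        · exact F1 hd hh hx'.2 hc hxc
        · apply hvb
          left
          refine ⟨x, hx, ?_⟩
          have : c = ⟨_, hv⟩ := Subtype.ext hc
          rwa [← this]
    -- the critical copy
    obtain ⟨g, hg1, hg2, hgfull, hgmin⟩ : ∃ g, A * NN h ≤ g ∧ g + 1 ≤ B * NN h ∧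
        n + 1 ≤ (hset h d m l X n (A * NN h) (g + 1)).ncard ∧
        (A * NN h < g → (hset h d m l X n (A * NN h) g).ncard < n + 1) := by
      classical
      have hex : ∃ g, A * NN h < g ∧ n + 1 ≤ (hset h d m l X n (A * NN h) g).ncard :=
        ⟨B * NN h, hAB', by omega⟩
      obtain ⟨g1, hg1⟩ : ∃ g1, g1 = Nat.find hex := ⟨_, rfl⟩
      have hsp := Nat.find_spec hex
      have hle := Nat.find_min' hex ⟨hAB', by omega⟩
      rw [← hg1] at hsp hle
      refine ⟨g1 - 1, by omega, by omega, ?_, ?_⟩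
      · rw [show g1 - 1 + 1 = g1 by omega]; exact hsp.2
      · intro hlt
        have := Nat.find_min hex (m := g1 - 1) (by omega)
        by_contra hcon
        exact this ⟨hlt, by omega⟩
    have hgeq := Set.eq_of_subset_of_ncard_le
      (hset_mono (h := h) (d := d) (m := m) (l := l) (X := X) (n := n) (le_refl (A * NN h)) hg2)
      (by
        have := Set.ncard_le_ncard hsub (hfs _ _ _)
        omega) (hfs _ _ _)
    have hright : ∀ b, g + 2 ≤ b → b < B * NN h → ∃ e e', 1 ≤ e ∧ e ≤ n + 1 ∧ 1 ≤ e' ∧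
        e' ≤ n + 1 ∧ Conn h d m l X (VsetElem h d (n + 1) (b + 1) e)
          (VsetElem h d (n + 1 + 1) (B + 1) e') := by
      intro b hb1 hb2
      have hem : hset h d m l X n b (B * NN h) = ∅ := by
        rw [Set.eq_empty_iff_forall_notMem]
        intro x hx
        have h1 : x ∈ hset h d m l X n (A * NN h) (B * NN h) :=
          hset_mono (by omega) le_rfl hx
        rw [← hgeq] at h1
        exact F3 hd hh h1.2 (hset_mono hb1 le_rfl hx).2
      obtain ⟨e, e', h1, h2, h3, h4, hC⟩ := ih b (B * NN h) hb2 hB' (by rw [hem]; simp)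
      refine ⟨e, e', h1, h2, h3, h4, ?_⟩
      rwa [Vset_succ _ _ _ _ _ h3 h4]
    have hleft : ∀ a, A * NN h < a → a ≤ g → ∃ e e', 1 ≤ e ∧ e ≤ n + 1 ∧ 1 ≤ e' ∧
        e' ≤ n + 1 ∧ Conn h d m l X (VsetElem h d (n + 1 + 1) (A + 1) e)
          (VsetElem h d (n + 1) (a + 1) e') := by
      intro a ha1 ha2
      have hlt : (hset h d m l X n (A * NN h) a).ncard < n + 1 :=
        lt_of_le_of_lt (Set.ncard_le_ncard (hset_mono le_rfl ha2) (hfs _ _ _))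
          (hgmin (by omega))
      obtain ⟨e, e', h1, h2, h3, h4, hC⟩ := ih (A * NN h) a ha1 (by omega) hlt
      refine ⟨e, e', h1, h2, h3, h4, ?_⟩
      rwa [Vset_succ _ _ _ _ _ h1 h2]
    -- the leaf
    obtain ⟨i, r, hir, hrN⟩ : ∃ i r, g = i * NN h + r ∧ r < NN h :=
      ⟨g / NN h, g % NN h, by rw [mul_comm]; exact (Nat.div_add_mod _ _).symm,
        Nat.mod_lt _ (NN_pos h)⟩
    have hiA : A ≤ i := by
      by_contra hcon
      have : (i + 1) * NN h ≤ A * NN h := Nat.mul_le_mul_right _ (by omega)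
      rw [add_mul] at this
      omega
    have hiB : i < B := by
      by_contra hcon
      have : B * NN h ≤ i * NN h := Nat.mul_le_mul_right _ (by omega)
      omega
    have hiA' : A * NN h ≤ i * NN h := Nat.mul_le_mul_right _ hiA
    have hiB' : (i + 1) * NN h ≤ B * NN h := Nat.mul_le_mul_right _ hiB
    rw [add_mul, one_mul] at hiB'
    obtain ⟨j, hj⟩ : ∃ j, j = (r + 1) / 2 + 1 := ⟨_, rfl⟩
    have hL : ∃ e, 1 ≤ e ∧ e ≤ n + 2 ∧ Conn h d m l X (VsetElem h d (n + 1 + 1) (A + 1) e)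
        (canon h m (.tree (n + 2) (i + 1) (leafPos h j))) := by
      by_cases hj1 : j = 1
      · subst hj1
        by_cases hiA2 : i = A
        · subst hiA2
          refine ⟨n + 2, by omega, le_rfl, ?_⟩
          rw [Vset_top h d m n i (by omega)]
          exact Conn.refl (hleafv _ _ (by omega) (by omega)) (hleafb _ _ _ (by omega) (by omega))
        · have h5 : (A + 1) * NN h ≤ i * NN h := Nat.mul_le_mul_right _ (by omega)
          rw [add_mul, one_mul] at h5
          have h6 : (i - 1 + 1) * NN h = i * NN h := by rw [show i - 1 + 1 = i by omega]
          rw [add_mul, one_mul] at h6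
          obtain ⟨e, e', he1, he2, he3, he4, hC⟩ := hleft (i * NN h - 2) (by omega) (by omega)
          refine ⟨e, he1, by omega, hC.trans ?_⟩
          rw [leaf_glue h m (n + 2) i (by omega) (by omega)]
          have h7 : i * NN h - 2 + 1 = (i - 1) * NN h + (2 * 2 ^ h - 2) := by omega
          rw [h7] at hC ⊢
          exact (hatt i (2 ^ h) _ e' (by omega) (by omega) (by omega) le_rfl (Or.inl rfl)
            (by omega) (by rw [pow_succ]; omega) he3 he4 hC.symm.left).symm
      · obtain ⟨e, e', he1, he2, he3, he4, hC⟩ := hleft (i * NN h + (2 * j - 3)) (by omega)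
          (by omega)
        refine ⟨e, he1, by omega, hC.trans ?_⟩
        have h7 : i * NN h + (2 * j - 3) + 1 = (i + 1 - 1) * NN h + (2 * j - 2) := by
          rw [Nat.add_sub_cancel]; omega
        rw [h7] at hC ⊢
        exact (hatt (i + 1) j _ e' (by omega) (by omega) (by omega) (by omega) (Or.inl rfl)
            (by omega) (by rw [pow_succ]; omega) he3 he4 hC.symm.left).symm
    have hR : ∃ e, 1 ≤ e ∧ e ≤ n + 2 ∧ Conn h d m l X
        (canon h m (.tree (n + 2) (i + 1) (leafPos h j)))
        (VsetElem h d (n + 1 + 1) (B + 1) e) := by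
      by_cases hj1 : j = 2 ^ h
      · rw [hj1]
        by_cases hiB2 : i + 1 = B
        · refine ⟨n + 2, by omega, le_rfl, ?_⟩
          rw [Vset_top h d m n B (by omega), ← hiB2,
            leaf_glue h m (n + 2) (i + 1) (by omega) (by omega)]
          exact Conn.refl (hleafv _ _ (by omega) (by omega)) (hleafb _ _ _ (by omega) (by omega))
        · have h5 : (i + 2) * NN h ≤ B * NN h := Nat.mul_le_mul_right _ (by omega)
          have h6 : (i + 1) * NN h = i * NN h + NN h := by ring
          rw [show (i + 2) * NN h = i * NN h + 2 * NN h by ring] at h5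
          obtain ⟨e, e', he1, he2, he3, he4, hC⟩ := hright ((i + 1) * NN h + 2) (by omega)
            (by omega)
          refine ⟨e', he3, by omega, Conn.trans ?_ hC⟩
          rw [← leaf_glue h m (n + 2) (i + 1) (by omega) (by omega)]
          have h7 : (i + 1) * NN h + 2 + 1 = (i + 1 + 1 - 1) * NN h + 3 := by
            rw [Nat.add_sub_cancel]
          rw [h7] at hC ⊢
          exact hatt (i + 1 + 1) 1 _ e (by omega) (by omega) (by omega) (by omega) (Or.inr rfl)
            (by omega) (by rw [pow_succ]; omega) he1 he2 hC.left
      · obtain ⟨e, e', he1, he2, he3, he4, hC⟩ := hright (i * NN h + 2 * j) (by omega)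
          (by omega)
        refine ⟨e', he3, by omega, Conn.trans ?_ hC⟩
        have h7 : i * NN h + 2 * j + 1 = (i + 1 - 1) * NN h + (2 * j + 1) := by
          rw [Nat.add_sub_cancel]; omega
        rw [h7] at hC ⊢
        exact hatt (i + 1) j _ e (by omega) (by omega) (by omega) (by omega) (Or.inr rfl)
            (by omega) (by rw [pow_succ]; omega) he1 he2 hC.left
    obtain ⟨e, he1, he2, hC⟩ := hL
    obtain ⟨e', he3, he4, hC'⟩ := hR
    exact ⟨e, e', he1, he2, he3, he4, hC.trans hC'⟩

end Ghdm

/-- for `d ≥ 2ℓ`, `h ≥ 2ℓ+2`, `m ≥ 2` and any set `X` of fewer than `m`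
vertices of `G_{h,d,m}`, there is an `S(G)`–`T(G)` path `P` with
`d_G(V(P), X ∪ {R(G)}) > ℓ`. -/
theorem statement9 (l h d m : ℕ) (hd : 2 * l ≤ d) (hh : 2 * l + 2 ≤ h) (hm : 2 ≤ m)
    (X : Set (Ghdm.Verts h d m)) (hXfin : X.Finite) (hX : X.ncard < m) :
    ∃ s t : Ghdm.Verts h d m, s.1 ∈ Ghdm.SsetR h d m ∧ t.1 ∈ Ghdm.TsetR h d m ∧
      ∃ P : (Ghdm.G h d m).Walk s t, P.IsPath ∧
        (l : ℕ∞) < CGT.sDist (Ghdm.G h d m) (CGT.walkSupp P)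
          (X ∪ Ghdm.lift {Ghdm.RootR m}) := by
  classical
  obtain ⟨n, rfl⟩ : ∃ n, m = n + 2 := ⟨m - 2, by omega⟩
  have hc : (Ghdm.hset h d (n + 2) l X (n + 1) 0 1).ncard < n + 1 + 1 :=
    lt_of_le_of_lt (Set.ncard_le_ncard (fun x hx => hx.1) hXfin) hX
  obtain ⟨e, e', h1, h2, h3, h4, hx, hy, P, hP⟩ :=
    Ghdm.main_ind hXfin hd hh (n + 1) le_rfl 0 1 (by omega) (by simp) hc
  refine ⟨_, _, ?_, ?_, P.bypass, P.bypass_isPath, ?_⟩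
  · by_cases he : e = n + 2
    · right
      show Ghdm.VsetElem h d (n + 2) (0 + 1) e = _
      rw [he]
      exact Ghdm.Vset_top h d _ n 0 (by omega)
    · left
      refine ⟨e, h1, by omega, ?_⟩
      show Ghdm.VsetElem h d (n + 2) (0 + 1) e = _
      rw [Ghdm.canon_Vset _ _ _ _ _ _ (by omega), Ghdm.Vset_succ _ _ _ _ _ h1 (by omega)]
      simp
  · by_cases he : e' = n + 2
    · right
      show Ghdm.VsetElem h d (n + 2) (1 + 1) e' = _
      rw [he, Ghdm.Vset_top h d (n + 2) n 1 (by omega), Ghdm.leaf_glue _ _ _ _ (by omega) le_rfl]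
    · left
      refine ⟨e', h3, by omega, ?_⟩
      show Ghdm.VsetElem h d (n + 2) (1 + 1) e' = _
      rw [Ghdm.canon_Vset _ _ _ _ _ _ (by omega), Ghdm.Vset_succ _ _ _ _ _ h3 (by omega),
        one_mul, Ghdm.NN_eq]
      rfl
  · rw [← ENat.add_one_le_iff (ENat.natCast_ne_top l)]
    refine le_iInf fun u => le_iInf fun v => ?_
    rw [ENat.add_one_le_iff (ENat.natCast_ne_top l)]
    by_contra hcon
    rw [not_lt] at hcon
    have hu := hP u.1 (P.support_bypass_subset_support u.2)
    have hne : (Ghdm.G h d (n + 2)).edist u.1 v.1 ≠ ⊤ := by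
      intro h0
      rw [h0] at hcon
      simp at hcon
    obtain ⟨p, hp⟩ := SimpleGraph.exists_walk_of_edist_ne_top hne
    have hnear : Ghdm.near h d (n + 2) l v.1 u.1 := by
      refine ⟨p.reverse, ?_⟩
      rw [SimpleGraph.Walk.length_reverse]
      rw [← hp] at hcon
      exact_mod_cast hcon
    rcases v.2 with hv | hv
    · exact hu (Or.inl ⟨_, hv, hnear⟩)
    · exact hu (Or.inr ⟨_, hv, hnear⟩)
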